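/- For every leader's decision x = (x₁, x₂) in the box [x̲₁, x̄₁] × [x̲₂, x̄₂], the set S(x) of maximizers of f(x, ·) over Ω(x) is a singleton {y*}, where y*₁ = t is the unique root in (0, 1/2) of h(z) = z + z^{2^{n−1}} − 1/2, y*_i = t^{2^{i−1}} for i = 2, …, n, y*_{n+1} = x₁, and y*_{n+2} = x₂. That is, y* ∈ Ω(x) and f(x, y) < f(x, y*) holds for every y ∈ Ω(x) with y ≠ y*. -/

import Mathlib

/-!
Squaring repeatedly along the chain `yᵢ² ≤ yᵢ₊₁` gives `yᵢ^(2^k) ≤ yᵢ₊ₖ` on `Ω(x)`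
(`Omega_pow_le`). In particular `y₁ + y₁^(2^(n−1)) ≤ y₁ + yₙ = 1/2`, so `y₁ ≤ t` by monotonicity
of `z + z^(2^(n−1))`. Since `yₙ ≥ 0` and the gap `x₁ + x₂ − y_{n+1} − y_{n+2}` is nonnegative,
`f(x, y) ≤ y₁ ≤ t = f(x, y*)`.

If equality holds, then `y₁ = t` and `yₙ = 1/2 − t = t^(2^(n−1)) > 0`, so the gap vanishes, which
forces `y_{n+1} = x₁` and `y_{n+2} = x₂`. Every intermediate coordinate is squeezed: from below
by `t^(2^(i−1)) ≤ yᵢ`, and from above because `yᵢ^(2^(n−i)) ≤ yₙ = (t^(2^(i−1)))^(2^(n−i))`.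
-/

/-- The lower-level feasible set `Ω(x)` of the bilevel example: points
`y ∈ ℝ^{n+2}` (0-indexed: Lean index `j` corresponds to math index `j+1`) with
`y₁ + yₙ = 1/2`, `yᵢ² ≤ yᵢ₊₁` for `i = 1,…,n−1`, `yᵢ ≥ 0` for `i = 1,…,n`,
`0 ≤ y_{n+1} ≤ x₁`, and `−x₂ ≤ y_{n+2} ≤ x₂`. -/
def Omega (n : ℕ) (x1 x2 : ℝ) : Set (Fin (n + 2) → ℝ) :=
  {y | y ⟨0, by omega⟩ + y ⟨n - 1, by omega⟩ = 1 / 2 ∧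
    (∀ i : ℕ, ∀ _h1 : 1 ≤ i, ∀ _h2 : i ≤ n - 1,
      (y ⟨i - 1, by omega⟩) ^ 2 ≤ y ⟨i, by omega⟩) ∧
    (∀ i : ℕ, ∀ _h1 : 1 ≤ i, ∀ _h2 : i ≤ n, 0 ≤ y ⟨i - 1, by omega⟩) ∧
    0 ≤ y ⟨n, by omega⟩ ∧ y ⟨n, by omega⟩ ≤ x1 ∧
    -x2 ≤ y ⟨n + 1, by omega⟩ ∧ y ⟨n + 1, by omega⟩ ≤ x2}

/-- The follower's objective `f(x, y) = y₁ − yₙ (x₁ + x₂ − y_{n+1} − y_{n+2})`. -/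
noncomputable def follower (n : ℕ) (x1 x2 : ℝ) (y : Fin (n + 2) → ℝ) : ℝ :=
  y ⟨0, by omega⟩ -
    y ⟨n - 1, by omega⟩ * (x1 + x2 - y ⟨n, by omega⟩ - y ⟨n + 1, by omega⟩)

/-- The set `S(x)` of maximizers of the follower's objective over `Ω(x)`. -/
def SOpt (n : ℕ) (x1 x2 : ℝ) : Set (Fin (n + 2) → ℝ) :=
  {y | y ∈ Omega n x1 x2 ∧
    ∀ y' ∈ Omega n x1 x2, follower n x1 x2 y' ≤ follower n x1 x2 y}

/-- The candidate unique maximizer: `y*ᵢ = t^(2^(i−1))` for `i = 1,…,n`,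
`y*_{n+1} = x₁`, `y*_{n+2} = x₂` (Lean index `j` is math index `j+1`). -/
noncomputable def ystar (n : ℕ) (t x1 x2 : ℝ) : Fin (n + 2) → ℝ := fun j =>
  if (j : ℕ) + 1 ≤ n then t ^ 2 ^ (j : ℕ)
  else if (j : ℕ) = n then x1
  else x2

/-- Iterating `yᵢ² ≤ yᵢ₊₁` along the chain of the first `n` coordinates (0-indexed). -/
lemma Omega_pow_le {n : ℕ} {x1 x2 : ℝ} {y : Fin (n + 2) → ℝ} (hy : y ∈ Omega n x1 x2)
    (i k : ℕ) (h : i + k < n) :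
    y ⟨i, by omega⟩ ^ 2 ^ k ≤ y ⟨i + k, by omega⟩ := by
  obtain ⟨-, hsq, hnn, -⟩ := hy
  induction k with
  | zero => simp
  | succ k ih =>
    have h0 : 0 ≤ y ⟨i, by omega⟩ := hnn (i + 1) (by omega) (by omega)
    calc y ⟨i, by omega⟩ ^ 2 ^ (k + 1) = (y ⟨i, by omega⟩ ^ 2 ^ k) ^ 2 := by
          rw [pow_succ, pow_mul]
      _ ≤ y ⟨i + k, by omega⟩ ^ 2 := pow_le_pow_left₀ (by positivity) (ih (by omega)) 2
      _ ≤ y ⟨i + (k + 1), by omega⟩ := hsq (i + k + 1) (by omega) (by omega)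

/-- `z ↦ z + z^m` reflects the order on nonnegative reals. -/
lemma le_of_add_pow_le {a b : ℝ} (m : ℕ) (hb : 0 ≤ b) (h : a + a ^ m ≤ b + b ^ m) : a ≤ b := by
  by_contra! hlt
  have := pow_le_pow_left₀ hb hlt.le m
  linarith

lemma exists_root {m : ℕ} (hm : m ≠ 0) :
    ∃ t ∈ Set.Ioo (0 : ℝ) (1 / 2), t + t ^ m - 1 / 2 = 0 := by
  have hc : ContinuousOn (fun z : ℝ => z + z ^ m - 1 / 2) (Set.Icc 0 (1 / 2)) := by fun_prop
  obtain ⟨t, ht, h⟩ := intermediate_value_Ioo (by norm_num) hc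
    (show (0 : ℝ) ∈ Set.Ioo _ _ from ⟨by simp [hm], by simp⟩)
  exact ⟨t, ht, h⟩

lemma ystar_mem {n : ℕ} (hn : 2 ≤ n) {t x1 x2 : ℝ} (ht : 0 ≤ t)
    (hroot : t + t ^ 2 ^ (n - 1) - 1 / 2 = 0) (hx1 : 0 ≤ x1) (hx2 : 0 ≤ x2) :
    ystar n t x1 x2 ∈ Omega n x1 x2 := by
  refine ⟨?_, fun i h1 h2 => ?_, fun i h1 h2 => ?_, ?_⟩
  · simp only [ystar]
    rw [if_pos (by omega), if_pos (by omega)]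
    rw [pow_zero, pow_one]
    linarith
  · simp only [ystar]
    rw [if_pos (by omega), if_pos (by omega), ← pow_mul, ← pow_succ, Nat.sub_add_cancel h1]
  · simp only [ystar]
    rw [if_pos (by omega)]
    positivity
  · simp [ystar, hx1]
    linarith

lemma follower_ystar {n : ℕ} (hn : 2 ≤ n) (t x1 x2 : ℝ) :
    follower n x1 x2 (ystar n t x1 x2) = t := by
  have : 0 + 1 ≤ n := by omega
  simp [follower, ystar]
  intro h
  omega

/-- Dropping the penalty term `yₙ (x₁ + x₂ − y_{n+1} − y_{n+2}) ≥ 0` bounds the objective by `y₁`,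
which the chain of squares bounds by `t`. -/
lemma follower_le {n : ℕ} (hn : 2 ≤ n) {t x1 x2 : ℝ} (ht : 0 ≤ t)
    (hroot : t + t ^ 2 ^ (n - 1) - 1 / 2 = 0) {y : Fin (n + 2) → ℝ}
    (hy : y ∈ Omega n x1 x2) :
    follower n x1 x2 y ≤ y ⟨0, by omega⟩ ∧ y ⟨0, by omega⟩ ≤ t := by
  have hch := Omega_pow_le hy 0 (n - 1) (by omega)
  simp only [zero_add] at hch
  obtain ⟨hsum, hsq, hnn, ha0, ha, hb0, hb⟩ := hy
  have hyn : 0 ≤ y ⟨n - 1, by omega⟩ := hnn n (by omega) le_rfl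
  constructor
  · have := mul_nonneg hyn
      (show 0 ≤ x1 + x2 - y ⟨n, by omega⟩ - y ⟨n + 1, by omega⟩ by linarith)
    unfold follower
    linarith
  · exact le_of_add_pow_le _ ht (by linarith)

/-- A feasible point attaining the value `t` is `y*`. -/
lemma eq_ystar {n : ℕ} (hn : 2 ≤ n) {t x1 x2 : ℝ} (ht : 0 < t)
    (hroot : t + t ^ 2 ^ (n - 1) - 1 / 2 = 0) {y : Fin (n + 2) → ℝ}
    (hy : y ∈ Omega n x1 x2) (hf : t ≤ follower n x1 x2 y) :
    y = ystar n t x1 x2 := by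
  obtain ⟨hle1, hle2⟩ := follower_le hn ht.le hroot hy
  have h0 : y ⟨0, by omega⟩ = t := by linarith
  have hch := Omega_pow_le hy
  obtain ⟨hsum, hsq, hnn, ha0, ha, hb0, hb⟩ := hy
  have hyn : y ⟨n - 1, by omega⟩ = t ^ 2 ^ (n - 1) := by linarith
  have hpos : 0 < t ^ 2 ^ (n - 1) := by positivity
  have hgap : x1 + x2 - y ⟨n, by omega⟩ - y ⟨n + 1, by omega⟩ ≤ 0 := by
    unfold follower at hf
    rw [hyn, h0] at hf
    by_contra! hg
    have := mul_pos hpos hg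
    linarith
  funext ⟨j, hj⟩
  simp only [ystar]
  split_ifs with h1 h2
  · apply le_antisymm
    · have hup := hch j (n - 1 - j) (by omega)
      have hidx : j + (n - 1 - j) = n - 1 := by omega
      simp only [hidx] at hup
      rw [hyn] at hup
      have hexp : t ^ 2 ^ (n - 1) = (t ^ 2 ^ j) ^ 2 ^ (n - 1 - j) := by
        rw [← pow_mul, ← pow_add, hidx]
      rw [hexp] at hup
      exact le_of_pow_le_pow_left₀ (by positivity) (by positivity) hup
    · have hlow := hch 0 j (by omega)
      simp only [zero_add] at hlow
      rwa [h0] at hlow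
  · subst h2
    linarith
  · obtain rfl : j = n + 1 := by omega
    linarith

/-- For every leader's decision `x` in the box, `S(x)` is the singleton
`{y*}`, where `y*₁ = t` is the unique root in `(0, 1/2)` of
`h(z) = z + z^(2^(n−1)) − 1/2`, `y*ᵢ = t^(2^(i−1))` for `i = 2,…,n`,
`y*_{n+1} = x₁`, `y*_{n+2} = x₂`; i.e. `y* ∈ Ω(x)` and `f(x, y) < f(x, y*)`
for every `y ∈ Ω(x)` with `y ≠ y*`. -/
theorem stmt6 (n : ℕ) (hn : 2 ≤ n)
    (xl1 xl2 xu1 xu2 : ℝ) (hl1 : 1 ≤ xl1) (hl2 : 1 ≤ xl2)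
    (hu1 : xl1 < xu1) (hu2 : xl2 < xu2)
    (x1 x2 : ℝ) (hx1 : x1 ∈ Set.Icc xl1 xu1) (hx2 : x2 ∈ Set.Icc xl2 xu2) :
    ∃ t : ℝ, t ∈ Set.Ioo (0 : ℝ) (1 / 2) ∧
      t + t ^ (2 ^ (n - 1)) - 1 / 2 = 0 ∧
      (∀ w ∈ Set.Ioo (0 : ℝ) (1 / 2),
        w + w ^ (2 ^ (n - 1)) - 1 / 2 = 0 → w = t) ∧
      ystar n t x1 x2 ∈ Omega n x1 x2 ∧
      (∀ y ∈ Omega n x1 x2, y ≠ ystar n t x1 x2 →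
        follower n x1 x2 y < follower n x1 x2 (ystar n t x1 x2)) ∧
      SOpt n x1 x2 = {ystar n t x1 x2} := by
  obtain ⟨t, ht, hroot⟩ := exists_root (m := 2 ^ (n - 1)) (by positivity)
  have h1 : 0 ≤ x1 := by linarith [hx1.1]
  have h2 : 0 ≤ x2 := by linarith [hx2.1]
  have hmem := ystar_mem hn ht.1.le hroot h1 h2
  have hval := follower_ystar hn t x1 x2
  have hlt : ∀ y ∈ Omega n x1 x2, y ≠ ystar n t x1 x2 →
      follower n x1 x2 y < follower n x1 x2 (ystar n t x1 x2) := by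
    intro y hy hne
    by_contra! hge
    exact hne (eq_ystar hn ht.1 hroot hy (hval ▸ hge))
  refine ⟨t, ht, hroot, fun w hw hwr => ?_, hmem, hlt, ?_⟩
  · exact le_antisymm (le_of_add_pow_le _ ht.1.le (by linarith))
      (le_of_add_pow_le _ hw.1.le (by linarith))
  · ext y
    refine ⟨fun hy => ?_, ?_⟩
    · exact eq_ystar hn ht.1 hroot hy.1 (hval ▸ hy.2 _ hmem)
    · rintro rfl
      refine ⟨hmem, fun y' hy' => ?_⟩
      obtain ⟨ha, hb⟩ := follower_le hn ht.1.le hroot hy'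
      linarith
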